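/- arXiv:2003.13023 — 2 statements merged into one kernel-verified Lean document; each statement's English description precedes it below -/
import Mathlib

section
/- Let A be a dg category. Then Twist(A) has twisted complexes: given an object {A|p} of Twist(A) and a degree-1 endomorphism {p|α|p}: {A|p} → {A|p} satisfying the Maurer–Cartan equation in Twist(A), the endomorphism p + α of A satisfies the Maurer–Cartan equation in A, and the object {A|p+α} together with the degree-0 isomorphism {p|id_A|p+α}: {A|p+α} → {A|p} is a twisted complex of ({A|p}, {p|α|p}) in Twist(A); in particular d({p|id_A|p+α}) = (−{p|α|p+α}) = (−{p|α|p})∘{p|id_A|p+α}. -/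
/-! Core formal framework: dg categories over a field `k`, given by explicit data
(`DGData`) together with the dg-category axioms (`IsDGCat`), following the
conventions of the paper: hom-sets are `ℤ`-graded `k`-vector spaces, `d` has
degree `1`, composition is associative of degree `0`, identities are closed of
degree `0`. -/

namespace P

universe u v

structure DGData (k : Type) [Field k] where
  Obj : Type u
  Hom : Obj → Obj → ℤ → Type v
  homAdd : ∀ A B i, AddCommGroup (Hom A B i)
  homMod : ∀ A B i, Module k (Hom A B i)
  d : ∀ {A B : Obj} {i : ℤ}, Hom A B i → Hom A B (i + 1)
  comp : ∀ {A B C : Obj} {i j : ℤ}, Hom B C j → Hom A B i → Hom A C (j + i)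
  id : ∀ A : Obj, Hom A A 0

attribute [instance] DGData.homAdd DGData.homMod

variable {k : Type} [Field k]

/-- Transport of a morphism along an equality of degrees. -/
def DGData.cast (D : DGData k) {A B : D.Obj} {i i' : ℤ} (h : i = i')
    (x : D.Hom A B i) : D.Hom A B i' := h ▸ x

/-- Transport of a morphism along equalities of its source, target and degree. -/
def DGData.hcast (D : DGData k) {A A' B B' : D.Obj} {i i' : ℤ}
    (hA : A = A') (hB : B = B') (hi : i = i') (x : D.Hom A B i) :
    D.Hom A' B' i' := by
  subst hA; subst hB; subst hi; exact x

/-- The axioms making the data `D` a dg category: hom-sets are complexes of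
`k`-vector spaces, composition is `k`-bilinear, the graded Leibniz rule holds,
composition is associative, and identities are closed two-sided units. -/
structure IsDGCat (D : DGData k) : Prop where
  d_add : ∀ {A B : D.Obj} {g : ℤ} (x y : D.Hom A B g), D.d (x + y) = D.d x + D.d y
  d_smul : ∀ {A B : D.Obj} {g : ℤ} (c : k) (x : D.Hom A B g), D.d (c • x) = c • D.d x
  comp_add_left : ∀ {A B C : D.Obj} {g h : ℤ} (β₁ β₂ : D.Hom B C h) (α : D.Hom A B g),
      D.comp (β₁ + β₂) α = D.comp β₁ α + D.comp β₂ α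
  comp_add_right : ∀ {A B C : D.Obj} {g h : ℤ} (β : D.Hom B C h) (α₁ α₂ : D.Hom A B g),
      D.comp β (α₁ + α₂) = D.comp β α₁ + D.comp β α₂
  comp_smul_left : ∀ {A B C : D.Obj} {g h : ℤ} (c : k) (β : D.Hom B C h) (α : D.Hom A B g),
      D.comp (c • β) α = c • D.comp β α
  comp_smul_right : ∀ {A B C : D.Obj} {g h : ℤ} (c : k) (β : D.Hom B C h) (α : D.Hom A B g),
      D.comp β (c • α) = c • D.comp β α
  d_d : ∀ {A B : D.Obj} {g : ℤ} (x : D.Hom A B g), D.d (D.d x) = 0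
  leibniz : ∀ {A B C : D.Obj} {g h : ℤ} (β : D.Hom B C h) (α : D.Hom A B g),
      D.d (D.comp β α) =
        D.cast (by ring) (D.comp (D.d β) α) +
          ((-1 : k) ^ h) • D.cast (by ring) (D.comp β (D.d α))
  assoc : ∀ {A B C E : D.Obj} {g h l : ℤ} (γ : D.Hom C E l) (β : D.Hom B C h)
      (α : D.Hom A B g),
      D.comp γ (D.comp β α) = D.cast (by ring) (D.comp (D.comp γ β) α)
  id_comp : ∀ {A B : D.Obj} {g : ℤ} (α : D.Hom A B g),
      D.cast (zero_add g) (D.comp (D.id B) α) = α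
  comp_id : ∀ {A B : D.Obj} {g : ℤ} (α : D.Hom A B g),
      D.cast (add_zero g) (D.comp α (D.id A)) = α
  d_id : ∀ A : D.Obj, D.d (D.id A) = 0

/-- A morphism is closed if its differential vanishes. -/
def DGData.IsClosed (D : DGData k) {A B : D.Obj} {g : ℤ} (x : D.Hom A B g) : Prop :=
  D.d x = 0

/-- The Maurer-Cartan equation `d(p) + p ∘ p = 0` for a degree `1` endomorphism. -/
def DGData.MC (D : DGData k) {A : D.Obj} (p : D.Hom A A 1) : Prop :=
  D.d p + D.comp p p = 0

/-- A chain of `n` (in fact, infinitely many; only the first `n` are ever used)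
composable morphisms `α m : A m ⟶ A (m+1)`, where `α m` is recorded together
with its *shifted* degree `g m`, i.e. `α m` lies in degree `g m + 1`.  This
encodes an element `s α_n ⊗ ⋯ ⊗ s α_1` of `S(A n, A (n+1)) ⊗ ⋯ ⊗ S(A 0, A 1)`
(the chain is indexed so that index `0` is the first morphism `α^1`). -/
abbrev DGData.Chain (D : DGData k) (A : ℕ → D.Obj) (g : ℕ → ℤ) : Type _ :=
  ∀ m : ℕ, D.Hom (A m) (A (m + 1)) (g m + 1)

/-- Partial sums of the (shifted) degrees of a chain. -/
def psum (g : ℕ → ℤ) (n : ℕ) : ℤ := ∑ m ∈ Finset.range n, g m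

lemma psum_succ (g : ℕ → ℤ) (r : ℕ) : psum g (r + 1) = psum g r + g r :=
  Finset.sum_range_succ g r

lemma psum_one (g : ℕ → ℤ) : psum g 1 = g 0 := by simp [psum]

lemma psum_two (g : ℕ → ℤ) : psum g 2 = g 0 + g 1 := by
  simp [psum, Finset.sum_range_succ]

lemma psum_const_zero (n : ℕ) : psum (fun _ => (0 : ℤ)) n = 0 := by simp [psum]

lemma psum_shift (g : ℕ → ℤ) (t : ℕ) :
    ∀ r, psum (fun m => g (t + m)) r = psum g (t + r) - psum g t := by
  intro r
  induction r with
  | zero => simp [psum]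
  | succ r ih => rw [psum_succ, ih, Nat.add_succ, psum_succ]; ring

/-- Update of a chain in one slot (keeping the degree). -/
def DGData.upd0 (D : DGData k) {A : ℕ → D.Obj} {g : ℕ → ℤ} (α : D.Chain A g)
    (m : ℕ) (v : D.Hom (A m) (A (m + 1)) (g m + 1)) : D.Chain A g := fun t =>
  if h : t = m then (by subst h; exact v) else α t

/-- Objects of the chain obtained by replacing the `j` consecutive entries
starting at position `l` by a single entry. -/
def splObj {τ : Type u} (A : ℕ → τ) (l j : ℕ) : ℕ → τ := fun t =>
  if t ≤ l then A t else A (t + j - 1)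

/-- Degrees of the spliced chain; the new entry at position `l` has (shifted)
degree `w`. -/
def splG (g : ℕ → ℤ) (l j : ℕ) (w : ℤ) : ℕ → ℤ := fun t =>
  if t < l then g t else if t = l then w else g (t + j - 1)

lemma splObj_le {τ : Type u} (A : ℕ → τ) {l j t : ℕ} (h : t ≤ l) :
    splObj A l j t = A t := if_pos h

lemma splObj_gt {τ : Type u} (A : ℕ → τ) {l j t : ℕ} (h : ¬ t ≤ l) :
    splObj A l j t = A (t + j - 1) := if_neg h

lemma splObj_zero {τ : Type u} (A : ℕ → τ) (l j : ℕ) : splObj A l j 0 = A 0 :=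
  splObj_le A (Nat.zero_le l)

lemma splObj_last {τ : Type u} (A : ℕ → τ) {l j n : ℕ} (h1 : 1 ≤ j)
    (h2 : l + j ≤ n) : splObj A l j (n - j + 1) = A n := by
  unfold splObj
  rw [if_neg (by omega)]
  exact congrArg A (by omega)

lemma splG_lt {g : ℕ → ℤ} {l j : ℕ} {w : ℤ} {t : ℕ} (h : t < l) :
    splG g l j w t = g t := by unfold splG; rw [if_pos h]

lemma splG_eq {g : ℕ → ℤ} {l j : ℕ} {w : ℤ} {t : ℕ} (h : t = l) :
    splG g l j w t = w := by unfold splG; rw [if_neg (by omega), if_pos h]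

lemma splG_gt {g : ℕ → ℤ} {l j : ℕ} {w : ℤ} {t : ℕ} (h1 : ¬ t < l) (h2 : ¬ t = l) :
    splG g l j w t = g (t + j - 1) := by unfold splG; rw [if_neg h1, if_neg h2]

/-- The sum of the degrees of the spliced chain, when the inserted entry has
the degree of a degree `1` operation applied to the block it replaces. -/
lemma psum_splG (g : ℕ → ℤ) {l j n : ℕ} (h1 : 1 ≤ j) (h2 : l + j ≤ n) :
    psum (splG g l j (psum (fun m => g (l + m)) j + 1)) (n - j + 1) =
      psum g n + 1 := by
  have hln : l + 1 ≤ n - j + 1 := by omega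
  rw [psum, ← Finset.sum_range_add_sum_Ico _ hln]
  have e1 : (∑ t ∈ Finset.range (l + 1),
      splG g l j (psum (fun m => g (l + m)) j + 1) t)
      = psum g l + (psum (fun m => g (l + m)) j + 1) := by
    rw [Finset.sum_range_succ]
    congr 1
    · exact Finset.sum_congr rfl fun t ht => splG_lt (Finset.mem_range.mp ht)
    · exact splG_eq rfl
  have e2 : (∑ t ∈ Finset.Ico (l + 1) (n - j + 1),
      splG g l j (psum (fun m => g (l + m)) j + 1) t)
      = ∑ u ∈ Finset.Ico (l + j) n, g u := by
    rw [Finset.sum_Ico_eq_sum_range, Finset.sum_Ico_eq_sum_range]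
    have hc : n - j + 1 - (l + 1) = n - (l + j) := by omega
    rw [hc]
    refine Finset.sum_congr rfl fun i hi => ?_
    rw [splG_gt (by omega) (by omega)]
    congr 1
    omega
  have e3 : (∑ u ∈ Finset.Ico (l + j) n, g u) = psum g n - psum g (l + j) := by
    rw [psum, psum, Finset.sum_Ico_eq_sub _ (by omega : l + j ≤ n)]
  rw [e1, e2, e3, psum_shift g l j]
  ring

/-- The spliced chain: replace the `j` entries starting at position `l` by the
single entry `v`. -/
def DGData.splChain (D : DGData k) {A : ℕ → D.Obj} {g : ℕ → ℤ} (α : D.Chain A g)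
    (l j : ℕ) (hj : 1 ≤ j) {w : ℤ} (v : D.Hom (A l) (A (l + j)) (w + 1)) :
    D.Chain (splObj A l j) (splG g l j w) := fun t =>
  if h1 : t < l then
    D.hcast (splObj_le A (le_of_lt h1)).symm (splObj_le A (by omega)).symm
      (by rw [splG_lt h1]) (α t)
  else if h2 : t = l then
    D.hcast (by rw [show t = l from h2]; exact (splObj_le A le_rfl).symm)
      (by rw [show t = l from h2, splObj_gt A (show ¬ l + 1 ≤ l by omega)]
          exact congrArg A (by omega))
      (by rw [splG_eq h2]) v
  else
    D.hcast (splObj_gt A (by omega)).symm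
      (by rw [splObj_gt A (show ¬ t + 1 ≤ l by omega)]; exact congrArg A (by omega))
      (by rw [splG_gt h1 h2]) (α (t + j - 1))

end P

namespace P

variable {k : Type} [Field k]

/-- Data of chosen twisted complexes: for every object `A` and Maurer-Cartan
degree `1` endomorphism `p` of `A`, an object `{A|p}` with a degree `0`
morphism `ι : {A|p} → A` and a candidate inverse. -/
structure TwistedData (D : DGData k) where
  obj : ∀ (A : D.Obj) (p : D.Hom A A 1), D.MC p → D.Obj
  ι : ∀ (A : D.Obj) (p : D.Hom A A 1) (hp : D.MC p), D.Hom (obj A p hp) A 0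
  ιInv : ∀ (A : D.Obj) (p : D.Hom A A 1) (hp : D.MC p), D.Hom A (obj A p hp) 0

/-- The axioms: `ι` is a degree `0` isomorphism (not necessarily closed)
satisfying `d(ι) + p ∘ ι = 0`. -/
structure IsTwistedData (D : DGData k) (T : TwistedData D) : Prop where
  ι_ιInv : ∀ A p hp, D.cast (by ring) (D.comp (T.ι A p hp) (T.ιInv A p hp)) = D.id A
  ιInv_ι : ∀ A p hp, D.cast (by ring) (D.comp (T.ιInv A p hp) (T.ι A p hp))
      = D.id (T.obj A p hp)
  dι : ∀ A p hp, D.d (T.ι A p hp) + D.cast (by ring) (D.comp p (T.ι A p hp)) = 0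

/-- A dg category `has twisted complexes` if it is equipped with such data
satisfying the axioms. -/
structure HasTwistedComplexes (D : DGData k) where
  T : TwistedData D
  isT : IsTwistedData D T

/-- The morphism `{q|α|p} := ι_q⁻¹ ∘ α ∘ ι_p : {A|p} → {B|q}`. -/
def twHom (D : DGData k) (T : TwistedData D) {A B : D.Obj} {a : ℤ}
    {q : D.Hom B B 1} (hq : D.MC q) (α : D.Hom A B a) {p : D.Hom A A 1}
    (hp : D.MC p) : D.Hom (T.obj A p hp) (T.obj B q hq) (0 + (a + 0)) :=
  D.comp (T.ιInv B q hq) (D.comp α (T.ι A p hp))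

/-- Objects of the completion by twisted complexes: pairs `{A|p}` with
`p : A → A` of degree `1` satisfying the Maurer-Cartan equation. -/
abbrev twObj (D : DGData k) : Type _ := (A : D.Obj) × {p : D.Hom A A 1 // D.MC p}

/-- The completion by twisted complexes `Twist(A)`: morphisms
`{A|p} → {B|q}` of degree `g` are morphisms `α : A → B` of degree `g`, written
`{q|α|p}`; composition and identities are those of `A`, and the differential is
`d({q|α|p}) = {q|(q∘α)|p} + {q|dα|p} + (-1)^{|α|+1} {q|(α∘p)|p}`. -/
@[reducible] def twData (D : DGData k) : DGData k where
  Obj := twObj D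
  Hom X Y g := D.Hom X.1 Y.1 g
  homAdd _ _ _ := inferInstance
  homMod _ _ _ := inferInstance
  d := fun {X Y g} α =>
    D.cast (by ring) (D.comp Y.2.1 α) + D.d α +
      ((-1 : k) ^ (g + 1)) • D.cast (by ring) (D.comp α X.2.1)
  comp := fun {X Y Z g h} β α => D.comp β α
  id X := D.id X.1

end P

namespace P

/-- **Statement 8.** Let `A` be a dg category.  Then `Twist(A)` has twisted
complexes: given an object `{A|p}` of `Twist(A)` and a degree-1 endomorphism
`{p|α|p}` of `{A|p}` satisfying the Maurer-Cartan equation in `Twist(A)`, the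
endomorphism `p + α` of `A` satisfies the Maurer-Cartan equation in `A`, and
the object `{A|p+α}` together with the degree-0 isomorphism
`{p|id_A|p+α} : {A|p+α} → {A|p}` is a twisted complex of `({A|p}, {p|α|p})` in
`Twist(A)`; in particular
`d({p|id_A|p+α}) = -{p|α|p+α} = (-{p|α|p}) ∘ {p|id_A|p+α}`. -/
theorem statement_8 {k : Type} [Field k] (D : DGData k) (hD : IsDGCat D)
    (A : D.Obj) (p : D.Hom A A 1) (hp : D.MC p) (α : D.Hom A A 1)
    (hα : (twData D).MC (A := ⟨A, ⟨p, hp⟩⟩) α) :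
    -- `p + α` satisfies the Maurer-Cartan equation in `A`
    D.MC (p + α) ∧
    ∀ hpa : D.MC (p + α),
      -- `{p|id_A|p+α}` is a degree-0 isomorphism `{A|p+α} → {A|p}` in `Twist(A)`
      ((twData D).cast (by norm_num)
          ((twData D).comp (A := ⟨A, ⟨p + α, hpa⟩⟩) (B := ⟨A, ⟨p, hp⟩⟩)
            (C := ⟨A, ⟨p + α, hpa⟩⟩) (i := 0) (j := 0) (D.id A) (D.id A)) =
        (twData D).id ⟨A, ⟨p + α, hpa⟩⟩) ∧
      ((twData D).cast (by norm_num)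
          ((twData D).comp (A := ⟨A, ⟨p, hp⟩⟩) (B := ⟨A, ⟨p + α, hpa⟩⟩)
            (C := ⟨A, ⟨p, hp⟩⟩) (i := 0) (j := 0) (D.id A) (D.id A)) =
        (twData D).id ⟨A, ⟨p, hp⟩⟩) ∧
      -- the defining equation of a twisted complex: `d(ι) + {p|α|p} ∘ ι = 0`
      ((twData D).d (A := ⟨A, ⟨p + α, hpa⟩⟩) (B := ⟨A, ⟨p, hp⟩⟩) (i := 0) (D.id A) +
        (twData D).cast (by norm_num)
          ((twData D).comp (A := ⟨A, ⟨p + α, hpa⟩⟩) (B := ⟨A, ⟨p, hp⟩⟩)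
            (C := ⟨A, ⟨p, hp⟩⟩) (i := 0) (j := 1) α (D.id A)) = 0) ∧
      -- in particular `d({p|id_A|p+α}) = -{p|α|p+α}`
      ((twData D).d (A := ⟨A, ⟨p + α, hpa⟩⟩) (B := ⟨A, ⟨p, hp⟩⟩) (i := 0) (D.id A) =
        - (twData D).cast (A := ⟨A, ⟨p + α, hpa⟩⟩) (B := ⟨A, ⟨p, hp⟩⟩)
            (by norm_num : (1:ℤ) = 0 + 1) α) ∧
      -- and `d({p|id_A|p+α}) = (-{p|α|p}) ∘ {p|id_A|p+α}`
      ((twData D).d (A := ⟨A, ⟨p + α, hpa⟩⟩) (B := ⟨A, ⟨p, hp⟩⟩) (i := 0) (D.id A) =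
        (twData D).cast (by norm_num)
          ((twData D).comp (A := ⟨A, ⟨p + α, hpa⟩⟩) (B := ⟨A, ⟨p, hp⟩⟩)
            (C := ⟨A, ⟨p, hp⟩⟩) (i := 0) (j := 1) (- α) (D.id A))) := by
  have hid : ∀ {g : D.Hom A A 1}, D.cast (add_zero 1) (D.comp g (D.id A)) = g :=
    fun {g} => hD.comp_id g
  have hid' : ∀ {g : D.Hom A A 1}, D.cast (zero_add 1) (D.comp (D.id A) g) = g :=
    fun {g} => hD.id_comp g
  have hdι : ∀ hpa : D.MC (p + α),
      ((twData D).d (A := ⟨A, ⟨p + α, hpa⟩⟩) (B := ⟨A, ⟨p, hp⟩⟩) (i := 0) (D.id A) :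
        D.Hom A A 1) = - α := by
    intro hpa
    have h1 : ((twData D).d (A := ⟨A, ⟨p + α, hpa⟩⟩) (B := ⟨A, ⟨p, hp⟩⟩) (i := 0) (D.id A) :
        D.Hom A A 1) = D.cast (add_zero 1) (D.comp p (D.id A)) + D.cast (zero_add 1) (D.d (D.id A))
          + ((-1 : k) ^ ((0 : ℤ) + 1)) • D.cast (zero_add 1) (D.comp (D.id A) (p + α)) := rfl
    have h2 : D.cast (zero_add 1) (D.d (D.id A)) = 0 := hD.d_id A
    have h3 : ((-1 : k) ^ ((0 : ℤ) + 1)) = -1 := by simp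
    have h4 : ∀ x y : D.Hom A A 1, x + 0 + (-1 : k) • (x + y) = -y := by
      intro x y
      rw [neg_one_smul]
      abel
    rw [hid, hid', h2, h3] at h1
    exact h1.trans (h4 p α)
  refine ⟨?_, fun hpa => ⟨hD.id_comp (D.id A), hD.id_comp (D.id A), ?_, hdι hpa, ?_⟩⟩
  · have h1 : D.comp p α + D.d α + ((-1 : k) ^ ((1 : ℤ) + 1)) • D.comp α p
        + D.comp α α = 0 := hα
    have h2 : D.d p + D.comp p p = 0 := hp
    have h3 : ((-1 : k) ^ ((1 : ℤ) + 1)) = 1 := by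
      rw [zpow_add₀ (by simp)]; simp
    rw [h3, one_smul] at h1
    show D.d (p + α) + D.comp (p + α) (p + α) = 0
    rw [hD.d_add, hD.comp_add_left, hD.comp_add_right, hD.comp_add_right]
    calc _ = (D.d p + D.comp p p) +
          (D.comp p α + D.d α + D.comp α p + D.comp α α) := by abel
      _ = 0 := by rw [h1, h2, add_zero]
  · have h : (-α : D.Hom A A 1) + α = 0 := neg_add_cancel α
    rw [← hdι hpa] at h
    nth_rw 2 [← hid (g := α)] at h
    exact h
  · exact (hdι hpa).trans (hid (g := -α)).symm

end P
end

section
/- There exist triangulated categories T₁ and T₂, a full subcategory A ⊆ T₁ spanned by a full strong exceptional sequence, and exact (triangulated) functors F, G: T₁ → T₂ such that the restrictions F|_A and G|_A are isomorphic functors, but F and G are not isomorphic as exact functors. -/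
namespace P19

open CategoryTheory Limits

/-- A (`k`-linear) triangulated category, packaged. -/
structure TriCat (k : Type) [Field k] where
  C : Type
  [cat : Category.{0} C]
  [pre : Preadditive C]
  [lin : CategoryTheory.Linear k C]
  [hz : HasZeroObject C]
  [hs : HasShift C ℤ]
  [sa : ∀ n : ℤ, (shiftFunctor C n).Additive]
  [tri : Pretriangulated C]

attribute [instance] TriCat.cat TriCat.pre TriCat.lin TriCat.hz TriCat.hs
  TriCat.sa TriCat.tri

/-- A sequence `E₁, …, E_n` is a full strong exceptional sequence:
`End(E_i) = k`, `Hom(E_i, E_j[l]) = 0` for all `l` whenever `i > j`,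
`Hom(E_i, E_j[l]) = 0` for `l ≠ 0`, and the only triangulated subcategory
containing all the `E_i` is the whole category. -/
def FullStrongExceptional (k : Type) [Field k] (T : TriCat k) {n : ℕ}
    (Es : Fin n → T.C) : Prop :=
  (∀ i, ∀ φ : Es i ⟶ Es i, ∃ c : k, φ = c • 𝟙 (Es i)) ∧
  (∀ i j : Fin n, j < i → ∀ (l : ℤ) (φ : Es i ⟶ (Es j)⟦l⟧), φ = 0) ∧
  (∀ (i j : Fin n) (l : ℤ), l ≠ 0 → ∀ φ : Es i ⟶ (Es j)⟦l⟧, φ = 0) ∧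
  (∀ S : ObjectProperty T.C, S.IsTriangulated → (∀ i, S (Es i)) → ∀ X : T.C, S X)

noncomputable section

open Pretriangulated ZeroObject

set_option linter.unusedSectionVars false

namespace Aux

section Sk

variable {U : Type} [Category.{0} U] [Preadditive U] [HasZeroObject U] [HasShift U ℤ]
  [∀ n : ℤ, (shiftFunctor U n).Additive] [Pretriangulated U]
  (P : ObjectProperty U)

/-- isomorphism classes of objects satisfying `P` -/
def SkT : Type := {q : Quotient (isIsomorphicSetoid U) // P q.out}

/-- the chosen representative -/
def rep (q : SkT P) : U := q.1.out

/-- a skeleton of the full subcategory given by `P` -/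
abbrev Sk : Type := InducedCategory U (rep P)

/-- the inclusion -/
abbrev J : Sk P ⥤ U := inducedFunctor (rep P)

lemma J_prop (X : Sk P) : P ((J P).obj X) := X.2

variable [P.IsClosedUnderIsomorphisms]

/-- the object of the skeleton corresponding to an object of `U`. -/
def sk (Y : U) (h : P Y) : Sk P :=
  (⟨Quotient.mk (isIsomorphicSetoid U) Y, P.prop_of_iso
    (Classical.choice (Quotient.exact (s := isIsomorphicSetoid U)
      (Quotient.out_eq (s := isIsomorphicSetoid U)
        (Quotient.mk (isIsomorphicSetoid U) Y)))).symm h⟩ : SkT P)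

/-- the comparison isomorphism -/
def skIso (Y : U) (h : P Y) : (J P).obj (sk P Y h) ≅ Y :=
  Classical.choice (Quotient.exact (s := isIsomorphicSetoid U)
      (Quotient.out_eq (s := isIsomorphicSetoid U)
        (Quotient.mk (isIsomorphicSetoid U) Y)))

lemma sk_eq (X Y : Sk P) (e : (J P).obj X ≅ (J P).obj Y) : X = Y := by
  apply Subtype.ext
  have h := Quotient.sound (s := isIsomorphicSetoid U) (a := X.1.out) (b := Y.1.out) ⟨e⟩
  rwa [Quotient.out_eq, Quotient.out_eq] at h

variable [P.IsTriangulated]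

/-- the shift functors on the skeleton -/
def skShift (n : ℤ) : Sk P ⥤ Sk P where
  obj X := sk P (((J P).obj X)⟦n⟧) (P.le_shift n _ (J_prop P X))
  map {X Y} f := InducedCategory.homMk
    ((skIso P _ (P.le_shift n _ (J_prop P X))).hom ≫ ((J P).map f)⟦n⟧' ≫
      (skIso P _ (P.le_shift n _ (J_prop P Y))).inv)
  map_id X := by
    ext
    simp
  map_comp f g := by
    ext
    simp

/-- compatibility of the shift functors with the inclusion -/
def skShiftIso (n : ℤ) : skShift P n ⋙ J P ≅ J P ⋙ shiftFunctor U n :=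
  NatIso.ofComponents (fun X => skIso P _ (P.le_shift n _ (J_prop P X)))
    (by
      intro X Y f
      simp [skShift])

instance : HasShift (Sk P) ℤ :=
  (fullyFaithfulInducedFunctor (rep P)).hasShift (skShift P) (skShiftIso P)

instance : (J P).CommShift ℤ :=
  Functor.CommShift.ofHasShiftOfFullyFaithful (fullyFaithfulInducedFunctor (rep P))
    (skShift P) (skShiftIso P)

instance (n : ℤ) : (shiftFunctor (Sk P) n).Additive where
  map_add {X Y f g} := by
    apply (J P).map_injective
    rw [← cancel_mono (((J P).commShiftIso n).hom.app Y)]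
    have := fun f : X ⟶ Y => ((J P).commShiftIso n).hom.naturality f
    simp only [Functor.comp_map] at this
    simp only [this, Functor.map_add, Preadditive.comp_add, Preadditive.add_comp]

instance : HasZeroObject (Sk P) := by
  have h0 : P (0 : U) := P.prop_zero
  refine ⟨sk P 0 h0, ?_⟩
  rw [IsZero.iff_id_eq_zero]
  apply (J P).map_injective
  rw [Functor.map_zero]
  exact ((isZero_zero U).of_iso (skIso P 0 h0)).eq_of_src _ _

instance : Pretriangulated (Sk P) where
  distinguishedTriangles := (J P).mapTriangle.obj ⁻¹' (distTriang U)
  isomorphic_distinguished T₁ hT₁ T₂ e :=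
    isomorphic_distinguished _ hT₁ _ ((J P).mapTriangle.mapIso e)
  contractible_distinguished X := by
    refine isomorphic_distinguished _ (contractible_distinguished ((J P).obj X)) _
      (Triangle.isoMk _ _ (Iso.refl _) (Iso.refl _) (J P).mapZeroObject ?_ ?_ ?_)
    · change (J P).map (𝟙 X) ≫ 𝟙 _ = 𝟙 _ ≫ 𝟙 _
      rw [(J P).map_id]
    · exact (isZero_zero U).eq_of_tgt _ _
    · exact ((isZero_zero U).of_iso (J P).mapZeroObject).eq_of_src _ _
  distinguished_cocone_triangle {X Y} f := by
    obtain ⟨Z', g', h', mem⟩ := distinguished_cocone_triangle ((J P).map f)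
    have hZ : P Z' := P.ext_of_isTriangulatedClosed₃ _ mem (J_prop P X) (J_prop P Y)
    let e := (skIso P Z' hZ).symm
    refine ⟨sk P Z' hZ, (fullyFaithfulInducedFunctor (rep P)).preimage (g' ≫ e.hom),
      (fullyFaithfulInducedFunctor (rep P)).preimage
        (e.inv ≫ h' ≫ ((J P).commShiftIso (1 : ℤ)).inv.app X),
      isomorphic_distinguished _ mem _ (Triangle.isoMk _ _ (Iso.refl _) (Iso.refl _) e.symm ?_ ?_ ?_)⟩
    · change (J P).map f ≫ 𝟙 _ = 𝟙 _ ≫ (J P).map f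
      rw [Category.comp_id, Category.id_comp]
    · change (J P).map ((fullyFaithfulInducedFunctor (rep P)).preimage (g' ≫ e.hom)) ≫ e.inv
        = 𝟙 _ ≫ g'
      rw [Functor.FullyFaithful.map_preimage, Category.assoc, e.hom_inv_id, Category.comp_id,
        Category.id_comp]
    · change ((J P).map ((fullyFaithfulInducedFunctor (rep P)).preimage
        (e.inv ≫ h' ≫ ((J P).commShiftIso (1 : ℤ)).inv.app X)) ≫
          ((J P).commShiftIso (1 : ℤ)).hom.app X) ≫ (𝟙 ((J P).obj X))⟦(1 : ℤ)⟧' = e.inv ≫ h'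
      rw [Functor.FullyFaithful.map_preimage, (shiftFunctor U (1 : ℤ)).map_id, Category.assoc, Category.assoc,
        Category.assoc, Iso.inv_hom_id_app_assoc]
      erw [Category.comp_id]
  rotate_distinguished_triangle T :=
    (rotate_distinguished_triangle ((J P).mapTriangle.obj T)).trans
      (distinguished_iff_of_iso ((J P).mapTriangleRotateIso.app T))
  complete_distinguished_triangle_morphism T₁ T₂ hT₁ hT₂ a b comm := by
    obtain ⟨c, ⟨hc₁, hc₂⟩⟩ := complete_distinguished_triangle_morphism ((J P).mapTriangle.obj T₁)
      ((J P).mapTriangle.obj T₂) hT₁ hT₂ ((J P).map a) ((J P).map b)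
      (((J P).map_comp _ _).symm.trans (((J P).congr_map comm).trans ((J P).map_comp _ _)))
    have h2 := (J P).commShiftIso_hom_naturality a (1 : ℤ)
    change (J P).obj T₁.obj₃ ⟶ (J P).obj T₂.obj₃ at c
    change (J P).map T₁.mor₂ ≫ c = (J P).map b ≫ (J P).map T₂.mor₂ at hc₁
    change ((J P).map T₁.mor₃ ≫ ((J P).commShiftIso (1 : ℤ)).hom.app T₁.obj₁) ≫
      ((J P).map a)⟦(1 : ℤ)⟧' = c ≫ (J P).map T₂.mor₃ ≫
        ((J P).commShiftIso (1 : ℤ)).hom.app T₂.obj₁ at hc₂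
    refine ⟨(fullyFaithfulInducedFunctor (rep P)).preimage c, ⟨?_, ?_⟩⟩
    · apply (J P).map_injective
      rw [(J P).map_comp, (J P).map_comp, Functor.FullyFaithful.map_preimage]
      exact hc₁
    · apply (J P).map_injective
      rw [← cancel_mono ((Functor.commShiftIso (J P) (1 : ℤ)).hom.app T₂.obj₁)]
      rw [(J P).map_comp, (J P).map_comp, Functor.FullyFaithful.map_preimage, Category.assoc,
        Category.assoc, ← hc₂, h2, Category.assoc]

instance : (J P).IsTriangulated where
  map_distinguished _ hT := hT

end Sk

section Gen

variable {U : Type} [Category.{0} U] [Preadditive U] [HasZeroObject U] [HasShift U ℤ]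
  [∀ n : ℤ, (shiftFunctor U n).Additive] [Pretriangulated U] {ι : Type} (E : ι → U)

/-- the objects generated by `E` -/
inductive Gen : U → Prop
  | base (i : ι) : Gen (E i)
  | zero (X : U) (h : IsZero X) : Gen X
  | shift (X : U) (n : ℤ) (h : Gen X) : Gen (X⟦n⟧)
  | ext (T : Triangle U) (hT : T ∈ distTriang U) (h₁ : Gen T.obj₁) (h₃ : Gen T.obj₃) : Gen T.obj₂
  | iso (X Y : U) (e : X ≅ Y) (h : Gen X) : Gen Y

/-- the generated object property -/
def GenP : ObjectProperty U := Gen E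

instance : (GenP E).IsClosedUnderIsomorphisms where
  of_iso e h := Gen.iso _ _ e h

instance : (GenP E).IsTriangulated where
  exists_zero := ⟨0, isZero_zero U, Gen.zero _ (isZero_zero U)⟩
  isStableUnderShiftBy n := ⟨fun X h => Gen.shift X n h⟩
  ext₂' T hT h₁ h₃ := ⟨_, Gen.ext T hT h₁ h₃, ⟨Iso.refl _⟩⟩

lemma GenP.base (i : ι) : GenP E (E i) := Gen.base i

/-- generators in the skeleton -/
def skE (i : ι) : Sk (GenP E) := sk (GenP E) (E i) (GenP.base E i)

/-- comparison -/
def skEIso (i : ι) : (J (GenP E)).obj (skE E i) ≅ E i := skIso _ _ _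

lemma gen_full (S : ObjectProperty (Sk (GenP E))) (hS : S.IsTriangulated)
    (h : ∀ i, S (skE E i)) (X : Sk (GenP E)) : S X := by
  have key : ∀ Y : U, Gen E Y → (S.map (J (GenP E))) Y := by
    intro Y hY
    induction hY with
    | base i => exact ⟨_, ⟨h i, ⟨skEIso E i⟩⟩⟩
    | zero X h =>
      exact (S.map (J (GenP E))).prop_of_iso ((isZero_zero U).iso h) (ObjectProperty.prop_zero _)
    | shift X n h ih => exact (S.map (J (GenP E))).le_shift n _ ih
    | ext T hT h₁ h₃ ih₁ ih₃ => exact ObjectProperty.ext_of_isTriangulatedClosed₂ _ T hT ih₁ ih₃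
    | iso X Y e h ih => exact (S.map (J (GenP E))).prop_of_iso e ih
  obtain ⟨Z, hZ, ⟨e⟩⟩ := key _ (J_prop _ X)
  have := sk_eq _ _ _ e
  exact this ▸ hZ

end Gen

section HomComp

variable {U : Type} [Category.{0} U] [Preadditive U] [HasZeroObject U] [HasShift U ℤ]
  [∀ n : ℤ, (shiftFunctor U n).Additive] [Pretriangulated U]

lemma van_shift {X Y : U} {l p q : ℤ} (H : ∀ φ : X ⟶ Y⟦l⟧, φ = 0) (h : l + p = q)
    (φ : X⟦p⟧ ⟶ Y⟦q⟧) : φ = 0 := by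
  rw [← cancel_mono ((shiftFunctorAdd' U l p q h).hom.app Y), zero_comp]
  obtain ⟨m, hm⟩ := (shiftFunctor U p).map_surjective
    (φ ≫ (shiftFunctorAdd' U l p q h).hom.app Y)
  rw [← hm, H m, Functor.map_zero]

lemma van_unshift {X Y : U} {l p q : ℤ} (h : l + p = q) (H : ∀ φ : X⟦p⟧ ⟶ Y⟦q⟧, φ = 0)
    (φ : X ⟶ Y⟦l⟧) : φ = 0 := by
  apply (shiftFunctor U p).map_injective
  rw [← cancel_mono ((shiftFunctorAdd' U l p q h).inv.app Y), Functor.map_zero, zero_comp]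
  exact H _

lemma van_zero {X Y : U} (H : ∀ φ : X ⟶ Y, φ = 0) (φ : X ⟶ Y⟦(0 : ℤ)⟧) : φ = 0 := by
  rw [← cancel_mono ((shiftFunctorZero U ℤ).hom.app Y), zero_comp]
  exact H _

lemma van_zero' {X Y : U} (H : ∀ φ : X ⟶ Y⟦(0 : ℤ)⟧, φ = 0) (φ : X ⟶ Y) : φ = 0 := by
  rw [← cancel_mono ((shiftFunctorZero U ℤ).inv.app Y), zero_comp]
  exact H _

/-- the defining data of a distinguished triangle, in elementary terms -/
structure Tri {A2 A3 S : U} (f : A2 ⟶ A3) (g : A3 ⟶ S) (h : S ⟶ A2⟦(1 : ℤ)⟧) : Prop where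
  fg : f ≫ g = 0
  gh : g ≫ h = 0
  hf : h ≫ f⟦(1 : ℤ)⟧' = 0
  co2 : ∀ {X : U} (φ : X ⟶ A3), φ ≫ g = 0 → ∃ ψ : X ⟶ A2, φ = ψ ≫ f
  co3 : ∀ {X : U} (φ : X ⟶ S), φ ≫ h = 0 → ∃ ψ : X ⟶ A3, φ = ψ ≫ g
  yo2 : ∀ {X : U} (φ : A3 ⟶ X), f ≫ φ = 0 → ∃ ψ : S ⟶ X, φ = g ≫ ψ
  yo3 : ∀ {X : U} (φ : S ⟶ X), g ≫ φ = 0 → ∃ ψ : A2⟦(1 : ℤ)⟧ ⟶ X, φ = h ≫ ψ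

lemma tri_of_dist {A2 A3 S : U} {f : A2 ⟶ A3} {g : A3 ⟶ S} {h : S ⟶ A2⟦(1 : ℤ)⟧}
    (hT : Triangle.mk f g h ∈ distTriang U) : Tri f g h where
  fg := comp_distTriang_mor_zero₁₂ _ hT
  gh := comp_distTriang_mor_zero₂₃ _ hT
  hf := comp_distTriang_mor_zero₃₁ _ hT
  co2 φ hφ := Triangle.coyoneda_exact₂ _ hT φ hφ
  co3 φ hφ := Triangle.coyoneda_exact₃ _ hT φ hφ
  yo2 φ hφ := Triangle.yoneda_exact₂ _ hT φ hφ
  yo3 φ hφ := Triangle.yoneda_exact₃ _ hT φ hφ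

lemma shift_to {W S : U} (H : ∀ (p : ℤ) (φ : W⟦p⟧ ⟶ S), φ = 0) (n : ℤ) (φ : W ⟶ S⟦n⟧) :
    φ = 0 :=
  van_unshift (p := -n) (q := 0) (by omega) (fun φ => van_zero (H _) φ) φ

variable {A2 A3 S : U} {f : A2 ⟶ A3} {g : A3 ⟶ S} {h : S ⟶ A2⟦(1 : ℤ)⟧}

lemma to_S (hT : Tri f g h) {W : U} (v2 : ∀ l : ℤ, l ≠ 0 → ∀ φ : W ⟶ A2⟦l⟧, φ = 0)
    (v3 : ∀ l : ℤ, l ≠ 0 → ∀ φ : W ⟶ A3⟦l⟧, φ = 0)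
    (hm : ∀ m : W ⟶ A2, m ≫ f = 0 → m = 0)
    (hfac : ∀ ψ : W ⟶ A3, ∃ m : W ⟶ A2, ψ = m ≫ f) (n : ℤ) (φ : W ⟶ S⟦n⟧) : φ = 0 := by
  refine shift_to (fun p φ => ?_) n φ
  have h1 : φ ≫ h = 0 := by
    obtain rfl | hp := eq_or_ne p 1
    · obtain ⟨m, hm'⟩ := (shiftFunctor U (1 : ℤ)).map_surjective (φ ≫ h)
      have : m ≫ f = 0 := by
        apply (shiftFunctor U (1 : ℤ)).map_injective
        rw [Functor.map_comp, hm', Category.assoc, hT.hf, comp_zero, Functor.map_zero]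
      rw [← hm', hm m this, Functor.map_zero]
    · exact van_shift (l := 1 - p) (v2 _ (by omega)) (by omega) _
  obtain ⟨ψ, rfl⟩ := hT.co3 φ h1
  obtain rfl | hp := eq_or_ne p 0
  · rw [← cancel_epi ((shiftFunctorZero U ℤ).inv.app W), comp_zero]
    obtain ⟨m, hm⟩ := hfac ((shiftFunctorZero U ℤ).inv.app W ≫ ψ)
    rw [← Category.assoc, hm, Category.assoc, hT.fg, comp_zero]
  · rw [van_zero' (van_shift (l := -p) (v3 _ (by omega)) (by omega)) ψ, zero_comp]

lemma from_S (hT : Tri f g h) {V : U} (v2 : ∀ l : ℤ, l ≠ 0 → ∀ φ : A2 ⟶ V⟦l⟧, φ = 0)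
    (v3 : ∀ l : ℤ, l ≠ 0 → ∀ φ : A3 ⟶ V⟦l⟧, φ = 0)
    (hm : ∀ m : A3 ⟶ V, f ≫ m = 0 → m = 0)
    (hfac : ∀ ψ : A2 ⟶ V, ∃ m : A3 ⟶ V, ψ = f ≫ m) (l : ℤ) (φ : S ⟶ V⟦l⟧) : φ = 0 := by
  have h1 : g ≫ φ = 0 := by
    obtain rfl | hl := eq_or_ne l 0
    · rw [← cancel_mono ((shiftFunctorZero U ℤ).hom.app V), zero_comp]
      apply hm
      rw [← Category.assoc, ← Category.assoc, hT.fg, zero_comp, zero_comp]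
    · exact v3 l hl _
  obtain ⟨ψ, rfl⟩ := hT.yo3 φ h1
  obtain rfl | hl := eq_or_ne l 1
  · obtain ⟨m, rfl⟩ := (shiftFunctor U (1 : ℤ)).map_surjective ψ
    obtain ⟨m', rfl⟩ := hfac m
    rw [Functor.map_comp, ← Category.assoc, hT.hf, zero_comp]
  · rw [van_shift (l := l - 1) (v2 _ (by omega)) (by omega) ψ, comp_zero]

lemma A3_S (hT : Tri f g h) (v2 : ∀ l : ℤ, ∀ φ : A3 ⟶ A2⟦l⟧, φ = 0)
    (v3 : ∀ l : ℤ, l ≠ 0 → ∀ φ : A3 ⟶ A3⟦l⟧, φ = 0) (l : ℤ) (hl : l ≠ 0)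
    (φ : A3 ⟶ S⟦l⟧) : φ = 0 := by
  refine van_unshift (p := -l) (q := 0) (by omega) (fun φ => van_zero (fun φ => ?_) φ) φ
  have h1 : φ ≫ h = 0 := van_shift (l := 1 + l) (v2 _) (by omega) _
  obtain ⟨ψ, rfl⟩ := hT.co3 φ h1
  rw [van_zero' (van_shift (l := l) (v3 _ (by omega)) (by omega)) ψ, zero_comp]

lemma S_S (hT : Tri f g h) (v3 : ∀ l : ℤ, l ≠ 0 → ∀ φ : A3 ⟶ S⟦l⟧, φ = 0)
    (v2 : ∀ (l : ℤ) (φ : A2 ⟶ S⟦l⟧), φ = 0) (l : ℤ) (hl : l ≠ 0) (φ : S ⟶ S⟦l⟧) : φ = 0 := by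
  obtain ⟨ψ, rfl⟩ := hT.yo3 φ (v3 l hl _)
  rw [van_shift (l := l - 1) (v2 _) (by omega) ψ, comp_zero]

lemma end_S {k : Type} [Field k] [Linear k U] (hT : Tri f g h)
    (v32 : ∀ l : ℤ, ∀ φ : A3 ⟶ A2⟦l⟧, φ = 0) (he : ∀ φ : A3 ⟶ A3, ∃ c : k, φ = c • 𝟙 A3)
    (v2 : ∀ (l : ℤ) (φ : A2 ⟶ S⟦l⟧), φ = 0) (φ : S ⟶ S) : ∃ c : k, φ = c • 𝟙 S := by
  obtain ⟨m, hm⟩ := hT.co3 (g ≫ φ) (v32 _ _)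
  obtain ⟨c, rfl⟩ := he m
  refine ⟨c, ?_⟩
  rw [← sub_eq_zero]
  obtain ⟨ψ, hψ⟩ := hT.yo3 (φ - c • 𝟙 S) (by simp [hm])
  rw [hψ, van_zero' (van_shift (l := -1) (v2 _) (by omega)) ψ, comp_zero]

end HomComp

section Assemble

variable {k : Type} [Field k]

lemma restrict_iso {C D : Type} [Category.{0} C] [Category.{0} D] (F G : C ⥤ D) {n : ℕ}
    (Es : Fin n → C) (φ : ∀ i, F.obj (Es i) ≅ G.obj (Es i))
    (nat : ∀ i j (m : Es i ⟶ Es j), F.map m ≫ (φ j).hom = (φ i).hom ≫ G.map m) :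
    Nonempty ((ObjectProperty.ι (fun X : C => ∃ i, Nonempty (X ≅ Es i)) ⋙ F) ≅
         (ObjectProperty.ι (fun X : C => ∃ i, Nonempty (X ≅ Es i)) ⋙ G)) := by
  let ix (X : ObjectProperty.FullSubcategory (fun X : C => ∃ i, Nonempty (X ≅ Es i))) : Fin n :=
    X.2.choose
  let e (X : ObjectProperty.FullSubcategory (fun X : C => ∃ i, Nonempty (X ≅ Es i))) :
    X.1 ≅ Es (ix X) := Classical.choice X.2.choose_spec
  refine ⟨NatIso.ofComponents (fun X => F.mapIso (e X) ≪≫ φ (ix X) ≪≫ (G.mapIso (e X)).symm) ?_⟩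
  intro X Y a
  change F.map a.hom ≫ F.map (e Y).hom ≫ (φ (ix Y)).hom ≫ G.map (e Y).inv =
    (F.map (e X).hom ≫ (φ (ix X)).hom ≫ G.map (e X).inv) ≫ G.map a.hom
  rw [← cancel_epi (F.map (e X).inv), ← cancel_mono (G.map (e Y).hom)]
  simp only [Category.assoc, ← G.map_comp, Iso.inv_hom_id, G.map_id, Category.comp_id]
  simp only [nat, G.map_comp, ← F.map_comp_assoc, Iso.inv_hom_id, F.map_id, Category.id_comp]

/-- the hypotheses on the three term chain -/
structure Chain (k : Type) [Field k] {U : Type} [Category.{0} U] [Preadditive U] [HasShift U ℤ]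
    [Linear k U] (A : Fin 3 → U) (i : A 0 ⟶ A 1) (f : A 1 ⟶ A 2) : Prop where
  van : ∀ a b (l : ℤ), l ≠ 0 → ∀ φ : A a ⟶ (A b)⟦l⟧, φ = 0
  van0 : ∀ a b, b < a → ∀ φ : A a ⟶ A b, φ = 0
  endo : ∀ a (φ : A a ⟶ A a), ∃ c : k, φ = c • 𝟙 (A a)
  hi : ∀ φ : A 0 ⟶ A 1, ∃ c : k, φ = c • i
  hf : ∀ φ : A 1 ⟶ A 2, ∃ c : k, φ = c • f
  hif : ∀ φ : A 0 ⟶ A 2, ∃ c : k, φ = c • (i ≫ f)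
  nif : i ≫ f ≠ 0

variable {U : Type} [Category.{0} U] [Preadditive U] [HasZeroObject U] [HasShift U ℤ]
  [∀ n : ℤ, (shiftFunctor U n).Additive] [Pretriangulated U] [Linear k U]

lemma Chain.vanall {A : Fin 3 → U} {i : A 0 ⟶ A 1} {f : A 1 ⟶ A 2} (H : Chain k A i f)
    {a b} (hab : b < a) (l : ℤ) (φ : A a ⟶ (A b)⟦l⟧) : φ = 0 := by
  obtain rfl | hl := eq_or_ne l 0
  · exact van_zero (H.van0 a b hab) φ
  · exact H.van _ _ l hl φ

/-- The facts about the exceptional sequence -/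
structure Exc (k : Type) [Field k] {U : Type} [Category.{0} U] [Preadditive U] [HasShift U ℤ]
    [Linear k U] (E : Fin 3 → U) : Prop where
  endo : ∀ i (φ : E i ⟶ E i), ∃ c : k, φ = c • 𝟙 (E i)
  lt : ∀ i j, j < i → ∀ (l : ℤ) (φ : E i ⟶ (E j)⟦l⟧), φ = 0
  ne : ∀ i j (l : ℤ), l ≠ 0 → ∀ (φ : E i ⟶ (E j)⟦l⟧), φ = 0
  z : ∀ φ : E 0 ⟶ E 2, φ = 0

lemma exc_of_chain {A : Fin 3 → U} {i : A 0 ⟶ A 1} {f : A 1 ⟶ A 2} (H : Chain k A i f)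
    {S : U} {g : A 2 ⟶ S} {h : S ⟶ (A 1)⟦(1 : ℤ)⟧} (hT : Tri f g h) :
    Exc k ![A 0, A 2, S] := by
  have nf : f ≠ 0 := fun h => H.nif (by rw [h, comp_zero])
  have t0 : ∀ (l : ℤ) (φ : A 0 ⟶ S⟦l⟧), φ = 0 := by
    refine to_S hT (H.van _ _) (H.van _ _) ?_ ?_
    · intro m hm
      obtain ⟨c, rfl⟩ := H.hi m
      rw [Linear.smul_comp, smul_eq_zero] at hm
      rw [hm.resolve_right H.nif, zero_smul]
    · intro ψ
      obtain ⟨c, rfl⟩ := H.hif ψ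
      exact ⟨c • i, by simp⟩
  have t1 : ∀ (l : ℤ) (φ : A 1 ⟶ S⟦l⟧), φ = 0 := by
    refine to_S hT (H.van _ _) (H.van _ _) ?_ ?_
    · intro m hm
      obtain ⟨c, rfl⟩ := H.endo _ m
      rw [Linear.smul_comp, Category.id_comp, smul_eq_zero] at hm
      rw [hm.resolve_right nf, zero_smul]
    · intro ψ
      obtain ⟨c, rfl⟩ := H.hf ψ
      exact ⟨c • 𝟙 _, by simp⟩
  have f0 : ∀ (l : ℤ) (φ : S ⟶ (A 0)⟦l⟧), φ = 0 := by
    refine from_S hT (H.van _ _) (H.van _ _) ?_ ?_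
    · intro m hm
      exact H.van0 _ _ (by decide) m
    · intro ψ
      exact ⟨0, by rw [comp_zero]; exact H.van0 _ _ (by decide) ψ⟩
  have f2 : ∀ (l : ℤ) (φ : S ⟶ (A 2)⟦l⟧), φ = 0 := by
    refine from_S hT (H.van _ _) (H.van _ _) ?_ ?_
    · intro m hm
      obtain ⟨c, rfl⟩ := H.endo _ m
      rw [Linear.comp_smul, Category.comp_id, smul_eq_zero] at hm
      rw [hm.resolve_right nf, zero_smul]
    · intro ψ
      obtain ⟨c, rfl⟩ := H.hf ψ
      exact ⟨c • 𝟙 _, by simp⟩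
  have t2 : ∀ (l : ℤ), l ≠ 0 → ∀ (φ : A 2 ⟶ S⟦l⟧), φ = 0 :=
    A3_S hT (H.vanall (by decide)) (H.van _ _)
  have ss := S_S hT t2 t1
  have es : ∀ φ : S ⟶ S, ∃ c : k, φ = c • 𝟙 S :=
    end_S hT (H.vanall (by decide)) (H.endo _) t1
  refine ⟨?_, ?_, ?_, ?_⟩
  · intro a
    fin_cases a
    · exact H.endo 0
    · exact H.endo 2
    · exact es
  · intro a b hab
    fin_cases a <;> fin_cases b
    · exact absurd hab (by decide)
    · exact absurd hab (by decide)
    · exact absurd hab (by decide)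
    · exact H.vanall (a := 2) (b := 0) (by decide)
    · exact absurd hab (by decide)
    · exact absurd hab (by decide)
    · exact f0
    · exact f2
    · exact absurd hab (by decide)
  · intro a b
    fin_cases a <;> fin_cases b
    · exact H.van 0 0
    · exact H.van 0 2
    · exact fun l _ => t0 l
    · exact H.van 2 0
    · exact H.van 2 2
    · exact t2
    · exact fun l _ => f0 l
    · exact fun l _ => f2 l
    · exact ss
  · exact van_zero' (t0 0)

/-- transport of vanishing to the skeleton -/
lemma exc_sk {E : Fin 3 → U} (H : Exc k E) : Exc k (skE E) := by
  have tr : ∀ (i j : Fin 3) (l : ℤ), (∀ φ : E i ⟶ (E j)⟦l⟧, φ = 0) →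
      ∀ φ : skE E i ⟶ (skE E j)⟦l⟧, φ = 0 := by
    intro i j l h φ
    apply (J (GenP E)).map_injective
    rw [Functor.map_zero, ← cancel_mono (((J (GenP E)).commShiftIso l).hom.app _),
      ← cancel_mono ((skEIso E j).hom⟦l⟧'), ← cancel_epi (skEIso E i).inv, zero_comp, zero_comp,
      comp_zero]
    exact h _
  refine ⟨?_, fun i j h l => tr i j l (H.lt i j h l), fun i j l h => tr i j l (H.ne i j l h), ?_⟩
  · intro i φ
    obtain ⟨c, hc⟩ := H.endo i ((skEIso E i).inv ≫ (J (GenP E)).map φ ≫ (skEIso E i).hom)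
    refine ⟨c, ?_⟩
    apply (J (GenP E)).map_injective
    rw [← cancel_mono (skEIso E i).hom, ← cancel_epi (skEIso E i).inv, hc, Functor.map_smul,
      (J (GenP E)).map_id]
    simp
  · intro φ
    apply (J (GenP E)).map_injective
    rw [Functor.map_zero, ← cancel_mono (skEIso E 2).hom, ← cancel_epi (skEIso E 0).inv, zero_comp,
      comp_zero]
    exact H.z _

end Assemble

section Main

variable {k : Type} [Field k]

/-- package a triangulated category -/
abbrev pack (k : Type) [Field k] (U : Type) [Category.{0} U] [Preadditive U] [HasZeroObject U]
    [HasShift U ℤ] [∀ n : ℤ, (shiftFunctor U n).Additive] [Pretriangulated U] [Linear k U] :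
    TriCat k := { C := U }

/-- the conclusion of the main theorem -/
def Concl (k : Type) [Field k] : Prop :=
    ∃ (T₁ T₂ : TriCat k) (n : ℕ) (Es : Fin n → T₁.C)
      (F G : T₁.C ⥤ T₂.C) (csF : F.CommShift ℤ) (csG : G.CommShift ℤ),
      F.Additive ∧ G.Additive ∧
      @Functor.IsTriangulated _ _ _ _ _ _ F csF _ _ _ _ _ _ _ _ ∧
      @Functor.IsTriangulated _ _ _ _ _ _ G csG _ _ _ _ _ _ _ _ ∧
      FullStrongExceptional k T₁ Es ∧
      Nonempty
        ((ObjectProperty.ι (fun X : T₁.C => ∃ i, Nonempty (X ≅ Es i)) ⋙ F) ≅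
         (ObjectProperty.ι (fun X : T₁.C => ∃ i, Nonempty (X ≅ Es i)) ⋙ G)) ∧
      IsEmpty (F ≅ G)

variable {U : Type} [Category.{0} U] [Preadditive U] [HasZeroObject U] [HasShift U ℤ]
  [∀ n : ℤ, (shiftFunctor U n).Additive] [Pretriangulated U] [Linear k U]
  {V : Type} [Category.{0} V] [Preadditive V] [HasZeroObject V] [HasShift V ℤ]
  [∀ n : ℤ, (shiftFunctor V n).Additive] [Pretriangulated V] [Linear k V]

/-- a functor killing the middle term identifies the third term with the shift of the first. -/
lemma obj_S_iso (F : U ⥤ V) [F.CommShift ℤ] [F.IsTriangulated] {A2 A3 S : U} {f : A2 ⟶ A3}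
    {g : A3 ⟶ S} {h : S ⟶ A2⟦(1 : ℤ)⟧} (hT : Triangle.mk f g h ∈ distTriang U)
    (h3 : IsZero (F.obj A3)) : Nonempty (F.obj S ≅ (F.obj A2)⟦(1 : ℤ)⟧) := by
  have := (Triangle.isZero₂_iff_isIso₃ _ (F.map_distinguished _ hT)).1 h3
  exact ⟨@asIso _ _ _ _ (F.mapTriangle.obj (Triangle.mk f g h)).mor₃ this⟩

lemma nat_exc (F G : U ⥤ V) [F.Additive] [G.Additive] [F.Linear k] [G.Linear k]
    {E : Fin 3 → U} (H : Exc k E) (φ : ∀ i, F.obj (E i) ≅ G.obj (E i))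
    (hF : IsZero (F.obj (E 1))) (hG : IsZero (G.obj (E 1))) (i j : Fin 3) (m : E i ⟶ E j) :
    F.map m ≫ (φ j).hom = (φ i).hom ≫ G.map m := by
  have h20 : ∀ m : E 2 ⟶ E 0, m = 0 := van_zero' (H.lt 2 0 (by decide) 0)
  by_cases hij : i = j
  · subst hij
    obtain ⟨c, rfl⟩ := H.endo i m
    simp
  by_cases hi : i = 1
  · subst hi
    exact hF.eq_of_src _ _
  by_cases hj : j = 1
  · subst hj
    exact hG.eq_of_tgt _ _
  have : m = 0 := by
    fin_cases i <;> fin_cases j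
    · exact absurd rfl hij
    · exact absurd rfl hj
    · exact H.z m
    · exact absurd rfl hi
    · exact absurd rfl hi
    · exact absurd rfl hi
    · exact h20 m
    · exact absurd rfl hj
    · exact absurd rfl hij
  rw [this, Functor.map_zero, Functor.map_zero, zero_comp, comp_zero]

theorem assemble (F G : U ⥤ V) [F.CommShift ℤ] [F.IsTriangulated] [G.CommShift ℤ]
    [G.IsTriangulated] [F.Additive] [G.Additive] [F.Linear k] [G.Linear k]
    {A : Fin 3 → U} {i : A 0 ⟶ A 1} {f : A 1 ⟶ A 2} (H : Chain k A i f)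
    (φ0 : F.obj (A 0) ≅ G.obj (A 0)) (φ1 : F.obj (A 1) ≅ G.obj (A 1))
    (hF : IsZero (F.obj (A 2))) (hG : IsZero (G.obj (A 2)))
    (hFi : F.map i ≠ 0) (hGi : G.map i = 0) : Concl k := by
  obtain ⟨S, g, h, hT⟩ := distinguished_cocone_triangle f
  have hE := exc_of_chain H (tri_of_dist hT)
  let E : Fin 3 → U := ![A 0, A 2, S]
  have hE' : Exc k (skE E) := exc_sk hE
  obtain ⟨φF⟩ := obj_S_iso F hT hF
  obtain ⟨φG⟩ := obj_S_iso G hT hG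
  let φ : ∀ a, F.obj (E a) ≅ G.obj (E a) := fun a => match a with
    | 0 => φ0
    | 1 => hF.iso hG
    | 2 => φF ≪≫ (shiftFunctor V (1 : ℤ)).mapIso φ1 ≪≫ φG.symm
  refine ⟨pack k (Sk (GenP E)), pack k V, 3, skE E, J (GenP E) ⋙ F, J (GenP E) ⋙ G,
    inferInstance, inferInstance, inferInstance, inferInstance, inferInstance, inferInstance,
    ⟨hE'.endo, hE'.lt, hE'.ne, gen_full E⟩, ?_, ?_⟩
  · refine restrict_iso _ _ _ (fun a => F.mapIso (skEIso E a) ≪≫ φ a ≪≫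
      (G.mapIso (skEIso E a)).symm) ?_
    refine nat_exc (k := k) (J (GenP E) ⋙ F) (J (GenP E) ⋙ G) hE' _ ?_ ?_
    · exact hF.of_iso (F.mapIso (skEIso E 1))
    · exact hG.of_iso (G.mapIso (skEIso E 1))
  · refine ⟨fun α => hFi ?_⟩
    have h0 : GenP E (A 0) := GenP.base E 0
    have h1 : GenP E (A 1) := (GenP E).ext_of_isTriangulatedClosed₁ _ hT (GenP.base E 1)
      (GenP.base E 2)
    obtain ⟨j, hj⟩ := (J (GenP E)).map_surjective
      ((skIso _ _ h0).hom ≫ i ≫ (skIso _ _ h1).inv)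
    have hGj : (J (GenP E) ⋙ G).map j = 0 := by
      rw [Functor.comp_map, hj, G.map_comp, G.map_comp, hGi, zero_comp, comp_zero]
    have hFj : (J (GenP E) ⋙ F).map j = 0 := by
      rw [← cancel_mono (α.hom.app _), zero_comp]
      refine (α.hom.naturality j).trans ?_
      rw [hGj, comp_zero]
    rw [Functor.comp_map, hj, F.map_comp, F.map_comp] at hFj
    rw [← cancel_mono (F.map (skIso _ _ h1).inv), ← cancel_epi (F.map (skIso _ _ h0).hom), hFj,
      zero_comp, comp_zero]

end Main

section AddClosure

variable {D : Type 1} [Category.{0} D] [Preadditive D] [HasZeroObject D] [HasBinaryBiproducts D]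

/-- codes for finite direct sums -/
inductive Code (I : Type) : Type
  | leaf (i : I)
  | zero
  | sum (a b : Code I)

/-- the interpretation of a code -/
def interp {I : Type} (f : I → D) : Code I → D
  | .leaf i => f i
  | .zero => 0
  | .sum a b => interp f a ⊞ interp f b

/-- the small additive closure of a family of objects -/
abbrev AddCl {I : Type} (f : I → D) : Type := InducedCategory D (interp f)

instance {I : Type} (f : I → D) : HasZeroObject (AddCl f) := by
  refine ⟨(Code.zero : Code I), ?_⟩
  rw [IsZero.iff_id_eq_zero]
  apply (inducedFunctor (interp f)).map_injective
  exact (isZero_zero D).eq_of_src _ _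

instance {I : Type} (f : I → D) : HasBinaryBiproducts (AddCl f) where
  has_binary_biproduct a b := by
    let bc : BinaryBicone a b :=
      { pt := (Code.sum a b : Code I)
        fst := InducedCategory.homMk (biprod.fst : interp f a ⊞ interp f b ⟶ _)
        snd := InducedCategory.homMk (biprod.snd : interp f a ⊞ interp f b ⟶ _)
        inl := InducedCategory.homMk (biprod.inl : _ ⟶ interp f a ⊞ interp f b)
        inr := InducedCategory.homMk (biprod.inr : _ ⟶ interp f a ⊞ interp f b)
        inl_fst := InducedCategory.hom_ext biprod.inl_fst
        inl_snd := InducedCategory.hom_ext biprod.inl_snd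
        inr_fst := InducedCategory.hom_ext biprod.inr_fst
        inr_snd := InducedCategory.hom_ext biprod.inr_snd }
    exact hasBinaryBiproduct_of_total bc (InducedCategory.hom_ext biprod.total)

instance {I : Type} (f : I → D) : HasFiniteBiproducts (AddCl f) := by
  have : HasFiniteProducts (AddCl f) := hasFiniteProducts_of_has_binary_and_terminal
  exact HasFiniteBiproducts.of_hasFiniteProducts

end AddClosure

section LinMat

instance {Q : Type} [Category.{0} Q] [Preadditive Q] : HasBinaryBiproducts (Mat_ Q) :=
  hasBinaryBiproducts_of_finite_biproducts _

variable {k : Type} [Field k] {Q : Type} [Category.{0} Q] [Preadditive Q] [Linear k Q]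

instance matLinear : Linear k (Mat_ Q) where
  homModule M N := inferInstanceAs (Module k (∀ (i : M.ι) (j : N.ι), M.X i ⟶ N.X j))
  smul_comp X Y Z r f g := by
    apply Mat_.hom_ext
    intro i j
    change ∑ l, (r • f i l) ≫ g l j = r • ∑ l, f i l ≫ g l j
    rw [Finset.smul_sum]
    simp
  comp_smul X Y Z f r g := by
    apply Mat_.hom_ext
    intro i j
    change ∑ l, f i l ≫ (r • g l j) = r • ∑ l, f i l ≫ g l j
    rw [Finset.smul_sum]
    simp

lemma mat_smul_apply {M N : Mat_ Q} (c : k) (f : M ⟶ N) (i j) : (c • f) i j = c • f i j := rfl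

instance {D : Type} [Category.{0} D] [Preadditive D] [HasFiniteBiproducts D] [Linear k D]
    (F : Q ⥤ D) [F.Additive] [F.Linear k] : (Mat_.lift F).Linear k where
  map_smul {X Y} f r := by
    apply biproduct.hom_ext
    intro j
    apply biproduct.hom_ext'
    intro i
    change biproduct.ι (fun i => F.obj (X.X i)) i ≫
      (biproduct.matrix fun i j => F.map ((r • f) i j)) ≫ biproduct.π (fun i => F.obj (Y.X i)) j =
      biproduct.ι (fun i => F.obj (X.X i)) i ≫
      (r • (biproduct.matrix fun i j => F.map (f i j))) ≫ biproduct.π (fun i => F.obj (Y.X i)) j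
    rw [Linear.smul_comp, Linear.comp_smul]
    simp only [biproduct.matrix_π, biproduct.ι_desc]
    rw [mat_smul_apply, F.map_smul]

instance : (Mat_.embedding Q).Linear k where
  map_smul _ _ := rfl

end LinMat

section Concrete

variable (k : Type) [Field k]

/-- linearized chain with three objects -/
abbrev Q3 : Type := Free k (Fin 3)

/-- the three projectives -/
def Pobj (a : Fin 3) : Mat_ (Q3 k) := (Mat_.embedding (Q3 k)).obj (Free.of k a)

/-- additive closure of the chain -/
abbrev AA : Type := AddCl (Pobj k)

/-- small category of vector spaces -/
abbrev VV : Type := AddCl (fun _ : Unit => ModuleCat.of k k)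

/-- the basic vector space -/
def kk : VV k := (Code.leaf () : Code Unit)

/-- a zero object -/
def zz : VV k := (Code.zero : Code Unit)

/-- the functor on the chain -/
def F0 (m : kk k ⟶ kk k) : Fin 3 ⥤ VV k := ComposableArrows.mk₂ m (0 : kk k ⟶ zz k)

/-- extension to the additive closure -/
def F1 (m : kk k ⟶ kk k) : AA k ⥤ VV k :=
  inducedFunctor (interp (Pobj k)) ⋙ Mat_.lift (Free.lift k (F0 k m))

instance (m : kk k ⟶ kk k) : (F1 k m).Additive := by unfold F1; infer_instance
instance (m : kk k ⟶ kk k) : (F1 k m).Linear k := by unfold F1; infer_instance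

/-- the projectives in `AA` -/
def PA (a : Fin 3) : AA k := (Code.leaf a : Code (Fin 3))

/-- morphisms between projectives -/
def pm {a b : Fin 3} (h : a ≤ b) : PA k a ⟶ PA k b :=
  InducedCategory.homMk ((Mat_.embedding (Q3 k)).map ((Free.embedding k (Fin 3)).map (homOfLE h)))

/-- identification of values -/
def F1iso (m : kk k ⟶ kk k) (a : Fin 3) : (F1 k m).obj (PA k a) ≅ (F0 k m).obj a :=
  (Mat_.embeddingLiftIso (Free.lift k (F0 k m))).app (Free.of k a)

lemma F1_nat (m : kk k ⟶ kk k) {a b : Fin 3} (h : a ≤ b) :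
    (F1 k m).map (pm k h) ≫ (F1iso k m b).hom =
      (F1iso k m a).hom ≫ (F0 k m).map (homOfLE h) := by
  refine ((Mat_.embeddingLiftIso (Free.lift k (F0 k m))).hom.naturality
    ((Free.embedding k (Fin 3)).map (homOfLE h))).trans ?_
  refine congrArg (fun z => (F1iso k m a).hom ≫ z) ?_
  exact (Free.lift_map_single k (F0 k m) (homOfLE h) 1).trans (one_smul _ _)

lemma pm_comp {a b c : Fin 3} (h : a ≤ b) (h' : b ≤ c) :
    pm k h ≫ pm k h' = pm k (h.trans h') :=
  InducedCategory.hom_ext (((Mat_.embedding (Q3 k)).congr_map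
    ((Free.embedding k (Fin 3)).map_comp (homOfLE h) (homOfLE h'))).trans
      ((Mat_.embedding (Q3 k)).map_comp _ _)).symm

lemma pm_id (a : Fin 3) : pm k (le_refl a) = 𝟙 _ :=
  InducedCategory.hom_ext (((Mat_.embedding (Q3 k)).congr_map
    ((Free.embedding k (Fin 3)).map_id a)).trans ((Mat_.embedding (Q3 k)).map_id _))

lemma free_gen {a b : Fin 3} (h : a ≤ b) (φ : Free.of k a ⟶ Free.of k b) :
    ∃ c : k, φ = c • (Free.embedding k (Fin 3)).map (homOfLE h) := by
  change (a ⟶ b) →₀ k at φ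
  refine ⟨φ (homOfLE h), ?_⟩
  change φ = φ (homOfLE h) • Finsupp.single (homOfLE h) (1 : k)
  ext x
  obtain rfl : x = homOfLE h := Subsingleton.elim _ _
  simp

lemma free_van {a b : Fin 3} (h : b < a) (φ : Free.of k a ⟶ Free.of k b) : φ = 0 := by
  change (a ⟶ b) →₀ k at φ
  change φ = (0 : (a ⟶ b) →₀ k)
  ext x
  exact absurd (leOfHom x) (not_le_of_gt h)

lemma free_ne {a b : Fin 3} (h : a ≤ b) : (Free.embedding k (Fin 3)).map (homOfLE h) ≠ 0 := by
  change (Finsupp.single (homOfLE h) (1 : k)) ≠ (0 : (a ⟶ b) →₀ k)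
  simp

lemma pm_gen {a b : Fin 3} (h : a ≤ b) (φ : PA k a ⟶ PA k b) : ∃ c : k, φ = c • pm k h := by
  obtain ⟨m, hm⟩ := (Mat_.embedding (Q3 k)).map_surjective
    (X := Free.of k a) (Y := Free.of k b) φ.hom
  obtain ⟨c, rfl⟩ := free_gen k h m
  exact ⟨c, InducedCategory.hom_ext hm.symm⟩

lemma pm_van {a b : Fin 3} (h : b < a) (φ : PA k a ⟶ PA k b) : φ = 0 := by
  obtain ⟨m, hm⟩ := (Mat_.embedding (Q3 k)).map_surjective
    (X := Free.of k a) (Y := Free.of k b) φ.hom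
  obtain rfl := free_van k h m
  exact InducedCategory.hom_ext hm.symm

lemma pm_ne {a b : Fin 3} (h : a ≤ b) : pm k h ≠ 0 := by
  intro h0
  apply free_ne k h
  apply (Mat_.embedding (Q3 k)).map_injective
  have h1 := congrArg InducedCategory.Hom.hom h0
  exact h1

end Concrete

section Single

variable (C : Type) [Category.{0} C] [Preadditive C] [HasZeroObject C] [HasBinaryBiproducts C]

/-- the homotopy category -/
abbrev KK : Type := HomotopyCategory C (ComplexShape.up ℤ)

/-- the degree zero embedding -/
abbrev sg : C ⥤ KK C :=
  CochainComplex.singleFunctor C 0 ⋙ HomotopyCategory.quotient C (ComplexShape.up ℤ)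

instance : (sg C).Faithful where
  map_injective {X Y f g} h := by
    have H := HomotopyCategory.homotopyOfEq _ _ h
    apply (CochainComplex.singleFunctor C 0).map_injective
    ext n
    rw [H.comm n]
    simp [dNext, prevD]

lemma sg_van (X Y : C) (l : ℤ) (hl : l ≠ 0) (φ : (sg C).obj X ⟶ ((sg C).obj Y)⟦l⟧) : φ = 0 := by
  rw [← cancel_mono (((HomotopyCategory.quotient C (ComplexShape.up ℤ)).commShiftIso l).inv.app _),
    zero_comp]
  obtain ⟨ψ, hψ⟩ := (HomotopyCategory.quotient C (ComplexShape.up ℤ)).map_surjective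
    (φ ≫ ((HomotopyCategory.quotient C (ComplexShape.up ℤ)).commShiftIso l).inv.app _)
  have : ψ = 0 := by
    ext n
    by_cases hn : n = 0
    · refine (HomologicalComplex.isZero_single_obj_X (ComplexShape.up ℤ) (0 : ℤ) Y (n + l)
        (by omega)).eq_of_tgt _ _
    · exact (HomologicalComplex.isZero_single_obj_X (ComplexShape.up ℤ) (0 : ℤ) X n
        hn).eq_of_src _ _
  rw [← hψ, this, Functor.map_zero]

variable {C} {D : Type} [Category.{0} D] [Preadditive D] [HasZeroObject D] [HasBinaryBiproducts D]

/-- compatibility of the single complexes with additive functors -/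
def sgIso' (F : C ⥤ D) [F.Additive] :
    CochainComplex.singleFunctor C 0 ⋙ F.mapHomologicalComplex (ComplexShape.up ℤ) ≅
      F ⋙ CochainComplex.singleFunctor D 0 :=
  HomologicalComplex.singleMapHomologicalComplex F (ComplexShape.up ℤ) (0 : ℤ)

/-- compatibility with additive functors -/
def sgIso (F : C ⥤ D) [F.Additive] :
    sg C ⋙ F.mapHomotopyCategory (ComplexShape.up ℤ) ≅ F ⋙ sg D :=
  Functor.associator _ _ _ ≪≫
    Functor.isoWhiskerLeft _ (F.mapHomotopyCategoryFactors (ComplexShape.up ℤ)) ≪≫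
    (Functor.associator _ _ _).symm ≪≫
    Functor.isoWhiskerRight (sgIso' F) _ ≪≫
    Functor.associator _ _ _

end Single

section Final

variable (k : Type) [Field k]

/-- the three objects -/
abbrev AK (a : Fin 3) : KK (AA k) := (sg (AA k)).obj (PA k a)

/-- morphisms between them -/
abbrev am {a b : Fin 3} (h : a ≤ b) : AK k a ⟶ AK k b := (sg (AA k)).map (pm k h)

lemma am_gen {a b : Fin 3} (h : a ≤ b) (φ : AK k a ⟶ AK k b) : ∃ c : k, φ = c • am k h := by
  obtain ⟨m, rfl⟩ := (sg (AA k)).map_surjective φ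
  obtain ⟨c, rfl⟩ := pm_gen k h m
  exact ⟨c, (sg (AA k)).map_smul _ _⟩

lemma chain : Chain k (AK k) (am k (a := 0) (b := 1) (by decide))
    (am k (a := 1) (b := 2) (by decide)) where
  van a b l hl φ := sg_van _ _ _ l hl φ
  van0 a b h φ := by
    obtain ⟨m, rfl⟩ := (sg (AA k)).map_surjective φ
    rw [pm_van k h m, Functor.map_zero]
  endo a φ := by
    obtain ⟨c, hc⟩ := am_gen k (le_refl a) φ
    refine ⟨c, ?_⟩
    rw [hc, am, pm_id, (sg (AA k)).map_id]
  hi φ := am_gen k _ φ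
  hf φ := am_gen k _ φ
  hif φ := by
    rw [← Functor.map_comp, pm_comp]
    exact am_gen k _ φ
  nif := by
    rw [← Functor.map_comp, pm_comp]
    intro h
    apply pm_ne k (a := 0) (b := 2) (by decide)
    apply (sg (AA k)).map_injective
    rw [Functor.map_zero]
    exact h

/-- the functors on homotopy categories -/
abbrev FK (m : kk k ⟶ kk k) : KK (AA k) ⥤ KK (VV k) :=
  (F1 k m).mapHomotopyCategory (ComplexShape.up ℤ)

/-- their values -/
def FKiso (m : kk k ⟶ kk k) (a : Fin 3) :
    (FK k m).obj (AK k a) ≅ (sg (VV k)).obj ((F0 k m).obj a) :=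
  (sgIso (F1 k m)).app (PA k a) ≪≫ (sg (VV k)).mapIso (F1iso k m a)

lemma FK_nat (m : kk k ⟶ kk k) {a b : Fin 3} (h : a ≤ b) :
    (FK k m).map (am k h) ≫ (FKiso k m b).hom =
      (FKiso k m a).hom ≫ (sg (VV k)).map ((F0 k m).map (homOfLE h)) := by
  have h1 := (sgIso (F1 k m)).hom.naturality (pm k h)
  have h2 := (sg (VV k)).congr_map (F1_nat k m h)
  rw [Functor.map_comp, Functor.map_comp] at h2
  change (FK k m).map (am k h) ≫ (sgIso (F1 k m)).hom.app (PA k b) ≫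
    (sg (VV k)).map (F1iso k m b).hom = ((sgIso (F1 k m)).hom.app (PA k a) ≫
    (sg (VV k)).map (F1iso k m a).hom) ≫ (sg (VV k)).map ((F0 k m).map (homOfLE h))
  change (FK k m).map (am k h) ≫ (sgIso (F1 k m)).hom.app (PA k b) =
    (sgIso (F1 k m)).hom.app (PA k a) ≫ (sg (VV k)).map ((F1 k m).map (pm k h)) at h1
  rw [Category.assoc, ← h2, ← Category.assoc, ← Category.assoc, h1]

lemma zz_isZero : IsZero (zz k) := by
  rw [IsZero.iff_id_eq_zero]
  apply (inducedFunctor _).map_injective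
  exact (isZero_zero (ModuleCat k)).eq_of_src _ _

lemma kk_ne : (𝟙 (kk k) : kk k ⟶ kk k) ≠ 0 := by
  intro h
  have h0 := congrArg InducedCategory.Hom.hom h
  have h1 : 𝟙 (ModuleCat.of k k) = 0 := h0
  have h2 := congrArg (fun f : ModuleCat.of k k ⟶ ModuleCat.of k k => f.hom (1 : k)) h1
  exact one_ne_zero (α := k) h2

lemma FK_zero (m : kk k ⟶ kk k) : IsZero ((FK k m).obj (AK k 2)) :=
  ((sg (VV k)).map_isZero (zz_isZero k)).of_iso (FKiso k m 2)

/-- value at the first object -/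
def FKiso0 (m : kk k ⟶ kk k) : (FK k m).obj (AK k 0) ≅ (sg (VV k)).obj (kk k) := FKiso k m 0

/-- value at the second object -/
def FKiso1 (m : kk k ⟶ kk k) : (FK k m).obj (AK k 1) ≅ (sg (VV k)).obj (kk k) := FKiso k m 1

lemma FK_nat01 (m : kk k ⟶ kk k) :
    (FK k m).map (am k (a := 0) (b := 1) (by decide)) ≫ (FKiso1 k m).hom =
      (FKiso0 k m).hom ≫ (sg (VV k)).map m :=
  FK_nat k m (a := 0) (b := 1) (by decide)

lemma FK_i (m : kk k ⟶ kk k) : (FK k m).map (am k (a := 0) (b := 1) (by decide)) = 0 ↔ m = 0 := by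
  have h := FK_nat01 k m
  constructor
  · intro h0
    rw [h0, zero_comp] at h
    apply (sg (VV k)).map_injective
    rw [Functor.map_zero]
    have h3 := h.symm
    rw [← comp_zero (f := (FKiso0 k m).hom)] at h3
    exact (cancel_epi _).1 h3
  · rintro rfl
    rw [Functor.map_zero, comp_zero] at h
    rw [← zero_comp (f := (FKiso1 k 0).hom)] at h
    exact (cancel_mono _).1 h

theorem concl : Concl k := by
  refine assemble (FK k (𝟙 _)) (FK k 0) (chain k) (FKiso0 k (𝟙 _) ≪≫ (FKiso0 k 0).symm)
    (FKiso1 k (𝟙 _) ≪≫ (FKiso1 k 0).symm) (FK_zero k _) (FK_zero k _) ?_ ?_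
  · rw [Ne, FK_i]
    exact kk_ne k
  · rw [FK_i]

end Final

end Aux

end

/-- **Statement 19.** There exist (`k`-linear) triangulated categories `T₁`
and `T₂`, a full subcategory `A ⊆ T₁` spanned by a full strong exceptional
sequence, and exact (triangulated) functors `F, G : T₁ → T₂` such that the
restrictions `F|_A` and `G|_A` are isomorphic functors, but `F` and `G` are
not isomorphic as exact functors. -/
theorem statement_19 (k : Type) [Field k] :
    ∃ (T₁ T₂ : TriCat k) (n : ℕ) (Es : Fin n → T₁.C)
      (F G : T₁.C ⥤ T₂.C) (csF : F.CommShift ℤ) (csG : G.CommShift ℤ),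
      F.Additive ∧ G.Additive ∧
      @Functor.IsTriangulated _ _ _ _ _ _ F csF _ _ _ _ _ _ _ _ ∧
      @Functor.IsTriangulated _ _ _ _ _ _ G csG _ _ _ _ _ _ _ _ ∧
      FullStrongExceptional k T₁ Es ∧
      Nonempty
        ((ObjectProperty.ι (fun X : T₁.C => ∃ i, Nonempty (X ≅ Es i)) ⋙ F) ≅
         (ObjectProperty.ι (fun X : T₁.C => ∃ i, Nonempty (X ≅ Es i)) ⋙ G)) ∧
      IsEmpty (F ≅ G) := by
  exact Aux.concl k

end P19
end
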